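/- Fix an integer N ≥ 1 and positive real constants τ, L, α, β, B, N₀, and for each n = 1,…,N positive constants c_n, f_n^max, h_n, p_n^max. Then the set of tuples (l, tᴹ, tˢ, E, tᴿ) with l, tᴹ, tˢ, E ∈ ℝᴺ and tᴿ ∈ ℝ satisfying: (i) l_n ≥ 0, tᴹ_n ≥ 0, tˢ_n > 0, E_n ≥ 0 for all n and tᴿ ≥ 0; (ii) Σ_{n=1}^N l_n = L; (iii) c_n·l_n ≤ tᴹ_n·f_n^max for all n; (iv) β·L·max_m (c_m/f_m^max) ≤ tᴿ; (v) tᴹ_n + tˢ_n ≤ τ − tᴿ for all n; (vi) α·l_n ≤ tˢ_n · B · ln(1 + (E_n/tˢ_n)·h_n/(N₀·B)) for all n; (vii) E_n ≤ tˢ_n · p_n^max for all n, is a convex subset of ℝ^{4N+1}. -/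

import Mathlib

open Finset

/-!
Substituting `E = tˢ * p` turns the transmission constraint into `α * l ≤ tˢ * r (E / tˢ)`, whose
right-hand side is the perspective of the rate function `r`. The hypograph of the perspective of
`f` is the convex cone generated by the hypograph of `f` placed at height `1`, so perspectives of
concave functions are concave, and the transmission constraint cuts out a convex set. Every other
constraint is affine.
-/

section Perspective

variable {𝕜 E β : Type*} [Field 𝕜] [AddCommGroup E] [Module 𝕜 E] [AddCommGroup β] [Module 𝕜 β]

/-- The perspective `(x, s) ↦ s • f (x / s)` of a function `f` on a vector space, which carries
joint concavity over from `f`. It is meaningful for `0 < s` only: at `s = 0` it takes the value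
`0`. -/
def perspective (f : E → β) (p : E × 𝕜) : β :=
  p.2 • f (p.2⁻¹ • p.1)

variable [LinearOrder 𝕜] [IsStrictOrderedRing 𝕜] [PartialOrder β] [IsOrderedAddMonoid β]
  [PosSMulMono 𝕜 β] {S : Set E} {f : E → β}

theorem convex_hypograph_at_height_one (hf : ConcaveOn 𝕜 S f) :
    Convex 𝕜 {q : (E × 𝕜) × β | q.1.2 = 1 ∧ q.1.1 ∈ S ∧ q.2 ≤ f q.1.1} :=
  (convex_hyperplane (LinearMap.snd 𝕜 E 𝕜 ∘ₗ LinearMap.fst 𝕜 (E × 𝕜) β).isLinear 1).inter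
    (hf.convex_hypograph.linear_preimage ((LinearMap.fst 𝕜 E 𝕜).prodMap LinearMap.id))

theorem hypograph_perspective_eq_hull (hf : ConcaveOn 𝕜 S f) :
    {q : (E × 𝕜) × β | (0 < q.1.2 ∧ q.1.2⁻¹ • q.1.1 ∈ S) ∧ q.2 ≤ perspective f q.1} =
      ConvexCone.hull 𝕜 {q : (E × 𝕜) × β | q.1.2 = 1 ∧ q.1.1 ∈ S ∧ q.2 ≤ f q.1.1} := by
  ext ⟨⟨x, s⟩, r⟩
  rw [SetLike.mem_coe, ConvexCone.mem_hull_of_convex (convex_hypograph_at_height_one hf)]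
  constructor
  · rintro ⟨⟨hs, hx⟩, hr⟩
    exact ⟨s, hs, (Set.mem_smul_set_iff_inv_smul_mem₀ hs.ne' _ _).2
      ⟨inv_mul_cancel₀ hs.ne', hx, (inv_smul_le_iff_of_pos hs).2 hr⟩⟩
  · rintro ⟨c, hc, hq⟩
    obtain ⟨hsc, hx, hr⟩ := (Set.mem_smul_set_iff_inv_smul_mem₀ hc.ne' _ _).1 hq
    obtain rfl : s = c := ((inv_mul_eq_one₀ hc.ne').1 hsc).symm
    exact ⟨⟨hc, hx⟩, (inv_smul_le_iff_of_pos hc).1 hr⟩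

theorem concaveOn_perspective (hf : ConcaveOn 𝕜 S f) :
    ConcaveOn 𝕜 {p : E × 𝕜 | 0 < p.2 ∧ p.2⁻¹ • p.1 ∈ S} (perspective f) := by
  apply concaveOn_of_convex_hypograph
  simp only [Set.mem_ofPred_eq, hypograph_perspective_eq_hull hf, ConvexCone.convex]

theorem concaveOn_mul_comp_div {S : Set 𝕜} {f : 𝕜 → 𝕜} (hf : ConcaveOn 𝕜 S f) :
    ConcaveOn 𝕜 {p : 𝕜 × 𝕜 | 0 < p.2 ∧ p.1 / p.2 ∈ S} fun p => p.2 * f (p.1 / p.2) := by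
  simp only [div_eq_inv_mul]
  exact concaveOn_perspective hf

end Perspective

theorem concaveOn_log_one_add_mul (k : ℝ) :
    ConcaveOn ℝ {u | 0 < 1 + k * u} fun u => Real.log (1 + k * u) :=
  (strictConcaveOn_log_Ioi.concaveOn.translate_right 1).comp_linearMap (LinearMap.mul ℝ ℝ k)

/-- The uplink rate `r(p) = B ln(1 + p h / (N₀ B))` achieved with RF transmit power `p` over a
channel of bandwidth `B`, gain `h` and noise power spectral density `N₀`. -/
noncomputable def uplinkRate (B N₀ h p : ℝ) : ℝ :=
  B * Real.log (1 + p * h / (N₀ * B))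

theorem concaveOn_uplinkRate {B N₀ h : ℝ} (hB : 0 ≤ B) (hN₀ : 0 ≤ N₀) (hh : 0 ≤ h) :
    ConcaveOn ℝ (Set.Ici 0) (uplinkRate B N₀ h) := by
  have hlog : ConcaveOn ℝ (Set.Ici 0) fun p => Real.log (1 + h / (N₀ * B) * p) :=
    (concaveOn_log_one_add_mul _).subset
      (fun p (hp : 0 ≤ p) => show 0 < 1 + h / (N₀ * B) * p by positivity) (convex_Ici 0)
  refine (hlog.smul hB).congr fun p _ => ?_
  simp only [uplinkRate, smul_eq_mul, mul_comm p, div_mul_eq_mul_div]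

theorem feasible_set_convex_general {ι : Type*} [Fintype ι] (τ L α tRmin : ℝ)
    (c fmax pmax : ι → ℝ) (r : ι → ℝ → ℝ) (hr : ∀ n, ConcaveOn ℝ (Set.Ici 0) (r n)) :
    Convex ℝ
      {x : (ι → ℝ) × (ι → ℝ) × (ι → ℝ) × (ι → ℝ) × ℝ |
        (∀ n, 0 ≤ x.1 n) ∧ (∀ n, 0 ≤ x.2.1 n) ∧ (∀ n, 0 < x.2.2.1 n) ∧
        (∀ n, 0 ≤ x.2.2.2.1 n) ∧ 0 ≤ x.2.2.2.2 ∧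
        (∑ n, x.1 n) = L ∧
        (∀ n, c n * x.1 n ≤ x.2.1 n * fmax n) ∧
        tRmin ≤ x.2.2.2.2 ∧
        (∀ n, x.2.1 n + x.2.2.1 n ≤ τ - x.2.2.2.2) ∧
        (∀ n, α * x.1 n ≤ x.2.2.1 n * r n (x.2.2.2.1 n / x.2.2.1 n)) ∧
        (∀ n, x.2.2.2.1 n ≤ x.2.2.1 n * pmax n)} := by
  rintro ⟨l, tM, tS, E, tR⟩ ⟨hl, htM, htS, hE, htR, hsum, hmap, hred, hlat, hrate, hpow⟩
    ⟨l', tM', tS', E', tR'⟩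
    ⟨hl', htM', htS', hE', htR', hsum', hmap', hred', hlat', hrate', hpow'⟩ a b ha hb hab
  simp only [Set.mem_ofPred_eq, Prod.smul_mk, Prod.mk_add_mk, Pi.add_apply, Pi.smul_apply,
    smul_eq_mul] at *
  refine ⟨fun n => ?_, fun n => ?_, fun n => convex_Ioi (0 : ℝ) (htS n) (htS' n) ha hb hab,
    fun n => ?_, ?_, ?_, fun n => ?_, ?_, fun n => ?_, fun n => ?_, fun n => ?_⟩
  · linear_combination a * hl n + b * hl' n
  · linear_combination a * htM n + b * htM' n
  · linear_combination a * hE n + b * hE' n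
  · linear_combination a * htR + b * htR'
  · rw [sum_add_distrib, ← mul_sum, ← mul_sum]
    linear_combination a * hsum + b * hsum' + L * hab
  · linear_combination a * hmap n + b * hmap' n
  · linear_combination a * hred + b * hred' - tRmin * hab
  · linear_combination a * hlat n + b * hlat' n + τ * hab
  · have hbits : a * (tS n * r n (E n / tS n)) + b * (tS' n * r n (E' n / tS' n)) ≤
        (a * tS n + b * tS' n) * r n ((a * E n + b * E' n) / (a * tS n + b * tS' n)) :=
      (concaveOn_mul_comp_div (hr n)).2
        (x := (E n, tS n)) ⟨htS n, div_nonneg (hE n) (htS n).le⟩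
        (y := (E' n, tS' n)) ⟨htS' n, div_nonneg (hE' n) (htS' n).le⟩ ha hb hab
    linear_combination a * hrate n + b * hrate' n + hbits
  · linear_combination a * hpow n + b * hpow' n

/-- The feasible set of the reformulated energy-efficient collaborative
computing problem (P2) is convex. -/
theorem feasible_set_convex (N : ℕ) (hN : 1 ≤ N)
    (τ L α β B N₀ : ℝ) (hτ : 0 < τ) (hL : 0 < L) (hα : 0 < α) (hβ : 0 < β)
    (hB : 0 < B) (hN₀ : 0 < N₀)
    (c fmax h pmax : Fin N → ℝ)
    (hc : ∀ n, 0 < c n) (hfmax : ∀ n, 0 < fmax n)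
    (hh : ∀ n, 0 < h n) (hpmax : ∀ n, 0 < pmax n) :
    Convex ℝ
      {x : (Fin N → ℝ) × (Fin N → ℝ) × (Fin N → ℝ) × (Fin N → ℝ) × ℝ |
        (∀ n, 0 ≤ x.1 n) ∧ (∀ n, 0 ≤ x.2.1 n) ∧ (∀ n, 0 < x.2.2.1 n) ∧
        (∀ n, 0 ≤ x.2.2.2.1 n) ∧ 0 ≤ x.2.2.2.2 ∧
        (∑ n : Fin N, x.1 n) = L ∧
        (∀ n, c n * x.1 n ≤ x.2.1 n * fmax n) ∧
        β * L * (Finset.univ.sup'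
            (Finset.univ_nonempty_iff.mpr (Fin.pos_iff_nonempty.mp hN))
            (fun m => c m / fmax m)) ≤ x.2.2.2.2 ∧
        (∀ n, x.2.1 n + x.2.2.1 n ≤ τ - x.2.2.2.2) ∧
        (∀ n, α * x.1 n ≤ x.2.2.1 n * B *
          Real.log (1 + (x.2.2.2.1 n / x.2.2.1 n) * h n / (N₀ * B))) ∧
        (∀ n, x.2.2.2.1 n ≤ x.2.2.1 n * pmax n)} := by
  simpa only [uplinkRate, mul_assoc] using feasible_set_convex_general τ L α _ c fmax pmax
    (fun n => uplinkRate B N₀ (h n)) fun n => concaveOn_uplinkRate hB.le hN₀.le (hh n).le
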